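/- Let D = diag(5 − 4√5, 2√5 − 5, 2√5 − 5) be the KCBS sum operator, built from projections P_j = v_j v_jᵀ and observables B_j = I − 2P_j on the KCBS five-cycle vectors. For σ = diag(2/3, 1/6, 1/6): (i) Tr(σ·D) = 5/3 − 2√5, and 5/3 − 2√5 > −3; (ii) for every j ∈ ZMod 5, Tr(σ·B_j·B_{j+1}) = (√5 − 6)/(3√5). -/

import Mathlib

/-- The KCBS five-cycle vectors
`v_j = (cos θ, sin θ·cos(4πj/5), sin θ·sin(4πj/5))`, indexed by `ZMod 5`. -/
noncomputable def kcbsVec (θ : ℝ) (j : ZMod 5) : Fin 3 → ℝ :=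
  ![Real.cos θ,
    Real.sin θ * Real.cos (4 * Real.pi * (j.val : ℝ) / 5),
    Real.sin θ * Real.sin (4 * Real.pi * (j.val : ℝ) / 5)]

/-- The rank-one KCBS projections `P_j = v_j v_jᵀ`. -/
noncomputable def kcbsProj (θ : ℝ) (j : ZMod 5) : Matrix (Fin 3) (Fin 3) ℝ :=
  Matrix.vecMulVec (kcbsVec θ j) (kcbsVec θ j)

/-- The KCBS `±1` observables `B_j = I − 2P_j`. -/
noncomputable def kcbsObs (θ : ℝ) (j : ZMod 5) : Matrix (Fin 3) (Fin 3) ℝ :=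
  1 - 2 • kcbsProj θ j

open Matrix

/-- The trace of `M` against a product of two reflections in orthogonal directions. -/
theorem trace_mul_reflection_mul_reflection {n R : Type*} [Fintype n] [DecidableEq n] [CommRing R]
    (M : Matrix n n R) {u w : n → R} (h : u ⬝ᵥ w = 0) :
    trace (M * ((1 - 2 • vecMulVec u u) * (1 - 2 • vecMulVec w w)))
      = trace M - 2 * (u ⬝ᵥ M *ᵥ u) - 2 * (w ⬝ᵥ M *ᵥ w) := by
  have hmul : vecMulVec u u * vecMulVec w w = 0 := by
    rw [vecMulVec_mul_vecMulVec, h]; simp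
  have htr (v : n → R) : trace (M * vecMulVec v v) = v ⬝ᵥ M *ᵥ v := by
    rw [mul_vecMulVec, trace_vecMulVec, dotProduct_comm]
  simp only [sub_mul, mul_sub, one_mul, mul_one, smul_mul_assoc, mul_smul_comm, hmul, smul_zero,
    mul_zero, trace_sub, trace_smul, htr, trace_zero]
  simp only [nsmul_eq_mul, Nat.cast_ofNat]
  ring

theorem cos_four_mul_pi_div_five : Real.cos (4 * Real.pi / 5) = -(1 + Real.sqrt 5) / 4 := by
  rw [show 4 * Real.pi / 5 = Real.pi - Real.pi / 5 by ring, Real.cos_pi_sub, Real.cos_pi_div_five]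
  ring

/-- Consecutive azimuthal angles of the KCBS vectors differ by `4π/5` modulo `2π`. -/
theorem cos_kcbs_angle_sub (j : ZMod 5) :
    Real.cos (4 * Real.pi * (j.val : ℝ) / 5 - 4 * Real.pi * ((j + 1).val : ℝ) / 5)
      = Real.cos (4 * Real.pi / 5) := by
  have hval : (j + 1).val = j.val + 1 ∨ j.val = (j + 1).val + 4 := by
    revert j; decide
  rcases hval with h | h
  · rw [h, ← Real.cos_neg]
    congr 1
    push_cast
    ring
  · rw [h, ← Real.cos_neg (4 * Real.pi / 5), ← Real.cos_add_two_pi (-_),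
      ← Real.cos_add_two_pi (-_ + _)]
    congr 1
    push_cast
    ring

/-- Adjacent KCBS vectors are orthogonal at the KCBS polar angle. -/
theorem kcbsVec_dotProduct_succ {θ : ℝ} (hcos : Real.cos θ ^ 2 = 1 / Real.sqrt 5) (j : ZMod 5) :
    kcbsVec θ j ⬝ᵥ kcbsVec θ (j + 1) = 0 := by
  have hang := cos_kcbs_angle_sub j
  rw [cos_four_mul_pi_div_five, Real.cos_sub] at hang
  have hexpand : kcbsVec θ j ⬝ᵥ kcbsVec θ (j + 1)
      = Real.cos θ ^ 2 + Real.sin θ ^ 2 * (-(1 + Real.sqrt 5) / 4) := by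
    rw [← hang]
    simp only [kcbsVec, dotProduct, Fin.sum_univ_three, Matrix.cons_val]
    ring
  have h5 : Real.sqrt 5 ^ 2 = 5 := Real.sq_sqrt (by norm_num)
  have hpos : 0 < Real.sqrt 5 := by positivity
  rw [hexpand, Real.sin_sq, hcos]
  field_simp
  linear_combination -h5

/-- The expectation of a KCBS projection in an axially symmetric diagonal state. -/
theorem kcbsVec_dotProduct_diagonal_mulVec (θ a b : ℝ) (j : ZMod 5) :
    kcbsVec θ j ⬝ᵥ Matrix.diagonal ![a, b, b] *ᵥ kcbsVec θ j
      = a * Real.cos θ ^ 2 + b * Real.sin θ ^ 2 := by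
  simp only [kcbsVec, dotProduct, Fin.sum_univ_three, Matrix.mulVec_diagonal, Matrix.cons_val]
  linear_combination (b * Real.sin θ ^ 2) *
    Real.cos_sq_add_sin_sq (4 * Real.pi * (j.val : ℝ) / 5)

/-- For the local qutrit marginal `σ = diag(2/3, 1/6, 1/6)` of the flagged
qutrit Werner-local state and the KCBS sum operator
`D = diag(5 − 4√5, 2√5 − 5, 2√5 − 5)`:
(i) `Tr(σD) = 5/3 − 2√5 > −3`, and
(ii) all five adjacent correlations equal `(√5 − 6)/(3√5)`. -/
theorem flagged_marginal_kcbs_noncontextual (θ : ℝ)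
    (hcos : Real.cos θ = (5 : ℝ) ^ (-(1 / 4 : ℝ)))
    (hsin : Real.sin θ = Real.sqrt (1 - 1 / Real.sqrt 5)) :
    (let D : Matrix (Fin 3) (Fin 3) ℝ :=
      Matrix.diagonal ![5 - 4 * Real.sqrt 5, 2 * Real.sqrt 5 - 5, 2 * Real.sqrt 5 - 5]
     let σ : Matrix (Fin 3) (Fin 3) ℝ := Matrix.diagonal ![2 / 3, 1 / 6, 1 / 6]
     Matrix.trace (σ * D) = 5 / 3 - 2 * Real.sqrt 5) ∧
    (5 / 3 - 2 * Real.sqrt 5 > -3) ∧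
    (∀ j : ZMod 5,
      Matrix.trace ((Matrix.diagonal ![2 / 3, 1 / 6, 1 / 6] : Matrix (Fin 3) (Fin 3) ℝ)
          * (kcbsObs θ j * kcbsObs θ (j + 1)))
        = (Real.sqrt 5 - 6) / (3 * Real.sqrt 5)) := by
  have hpos : 0 < Real.sqrt 5 := by positivity
  have h5 : Real.sqrt 5 ^ 2 = 5 := Real.sq_sqrt (by norm_num)
  have hcos2 : Real.cos θ ^ 2 = 1 / Real.sqrt 5 := by
    rw [hcos, ← Real.rpow_natCast, ← Real.rpow_mul (by norm_num), Real.sqrt_eq_rpow,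
      one_div ((5 : ℝ) ^ (1 / 2 : ℝ)), ← Real.rpow_neg (by norm_num)]
    norm_num
  refine ⟨?_, ?_, fun j => ?_⟩
  · simp only [Matrix.diagonal_mul_diagonal, Matrix.trace_diagonal, Fin.sum_univ_three,
      Matrix.cons_val]
    ring
  · nlinarith
  · rw [kcbsObs, kcbsObs, kcbsProj, kcbsProj,
      trace_mul_reflection_mul_reflection _ (kcbsVec_dotProduct_succ hcos2 j),
      kcbsVec_dotProduct_diagonal_mulVec, kcbsVec_dotProduct_diagonal_mulVec, Real.sin_sq, hcos2,
      Matrix.trace_diagonal]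
    simp only [Fin.sum_univ_three, Matrix.cons_val]
    field_simp
    ring
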